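/- Let G be a finite group, U a free ℝ[G]-module with ℝ[G]-basis u_1,…,u_q carrying a non-degenerate G-invariant real-valued symmetric bilinear form σ, and W a finite-dimensional complex representation of G with a non-degenerate G-invariant alternating bilinear form κ; let {w_1,…,w_{2N}} be a hyperbolic basis of (W,κ) ordered as w_1, w_1', …, w_N, w_N'. Let E = (U ⊗_ℝ W)^G with the diagonal G-action, and let β be the restriction of σ ⊗ κ to E; β is a non-degenerate alternating form on E, and dim_ℂ E = 2qN. Let T be the ℂ-linear endomorphism of W^q given by the q×q matrix (σ̃(u_i,u_j))_{i,j} with σ̃(u,u') = ∑_{g∈G} σ(gu,u')g^{-1}; T is self-adjoint with respect to the orthogonal sum form κ^{(q)}, and let B be any automorphism of W^q with κ^{(q)}(|G|^{-1}Tx, y) = κ^{(q)}(Bx, By) for all x,y. Then for any hyperbolic basis {e_1,e_1',…,e_{qN},e_{qN}'} of (E,β), the equality ∧_{i=1}^{q} ∧_{n=1}^{2N} |G|^{-1} r_G(u_i ⊗ w_n) = det(B) · (e_1 ∧ e_1' ∧ ⋯ ∧ e_{qN} ∧ e_{qN}') holds in ⋀^{2qN} E, the wedge on the left taken in lexicographic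 order of (i,n). (That is, Pf_{(σ⊗κ)^G}(∧_{i,n} |G|^{-1} r_G(u_i ⊗ w_n)) = pf_{κ^{(q)}}(|G|^{-1} T).) -/

import Mathlib

open scoped TensorProduct

/-- Interleaving of two families `u u' : Fin n → V` into the family
`u 0, u' 0, u 1, u' 1, …` indexed by `Fin (2 * n)`. -/
def interleave {V : Type*} {n : ℕ} (u u' : Fin n → V) : Fin (2 * n) → V :=
  fun k =>
    if k.val % 2 = 0 then u ⟨k.val / 2, by have := k.isLt; omega⟩
    else u' ⟨k.val / 2, by have := k.isLt; omega⟩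

/-- `{u 0, u' 0, …, u (n-1), u' (n-1)}` is a hyperbolic basis of `V` with respect to the
bilinear form `h`. -/
def IsHyperbolicBasis {K V : Type*} [Field K] [AddCommGroup V] [Module K V] {n : ℕ}
    (h : LinearMap.BilinForm K V) (u u' : Fin n → V) : Prop :=
  LinearIndependent K (interleave u u') ∧
  Submodule.span K (Set.range (interleave u u')) = ⊤ ∧
  (∀ i j, h (u i) (u j) = 0) ∧
  (∀ i j, h (u' i) (u' j) = 0) ∧
  (∀ i j, h (u i) (u' j) = if i = j then 1 else 0)

/-- The complex subspace of invariants of the diagonal action on `W ⊗[ℝ] M`. -/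
def diagInvariantsC {G W M : Type*} [Group G]
    [AddCommGroup W] [Module ℂ W] [AddCommGroup M] [Module ℝ M]
    (ρW : Representation ℂ G W) (ρM : Representation ℝ G M) :
    Submodule ℂ (W ⊗[ℝ] M) where
  carrier := {x | ∀ g : G, TensorProduct.map ((ρW g).restrictScalars ℝ) (ρM g) x = x}
  add_mem' := by
    intro a b ha hb g
    rw [map_add, ha g, hb g]
  zero_mem' := by intro g; simp
  smul_mem' := by
    intro c x hx g
    have h : ∀ y : W ⊗[ℝ] M,
        TensorProduct.map ((ρW g).restrictScalars ℝ) (ρM g) (c • y)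
          = c • TensorProduct.map ((ρW g).restrictScalars ℝ) (ρM g) y := by
      intro y
      induction y using TensorProduct.induction_on with
      | zero => simp
      | tmul w m =>
          rw [TensorProduct.smul_tmul', TensorProduct.map_tmul, TensorProduct.map_tmul,
            TensorProduct.smul_tmul']
          simp
      | add a b ha hb => rw [smul_add, map_add, ha, hb, map_add, smul_add]
    rw [h, hx g]

/-- The restriction of the form `κ ⊗ σ` to the invariants `E = (W ⊗_ℝ U)^G`. -/
noncomputable def betaE {G W U : Type*} [Group G]
    [AddCommGroup W] [Module ℂ W] [AddCommGroup U] [Module ℝ U]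
    (ρW : Representation ℂ G W) (ρU : Representation ℝ G U)
    (κ : LinearMap.BilinForm ℂ W) (σ : LinearMap.BilinForm ℝ U) :
    LinearMap.BilinForm ℂ (diagInvariantsC ρW ρU) :=
  (LinearMap.BilinForm.tmul κ σ).compl₁₂
    (diagInvariantsC ρW ρU).subtype (diagInvariantsC ρW ρU).subtype

section Generic

theorem interleave_even {V : Type*} {n : ℕ} (u u' : Fin n → V) (i : Fin n)
    (h : 2 * i.val + 0 < 2 * n) : interleave u u' ⟨2 * i.val + 0, h⟩ = u i := by
  unfold interleave
  have h1 : (2 * i.val + 0) % 2 = 0 := by omega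
  rw [if_pos h1]
  congr 1
  ext
  simp

theorem interleave_odd {V : Type*} {n : ℕ} (u u' : Fin n → V) (i : Fin n)
    (h : 2 * i.val + 1 < 2 * n) : interleave u u' ⟨2 * i.val + 1, h⟩ = u' i := by
  unfold interleave
  have h1 : ¬ (2 * i.val + 1) % 2 = 0 := by omega
  rw [if_neg h1]
  congr 1
  ext
  simp
  omega

theorem interleave_cases {V : Type*} {n : ℕ} (u u' : Fin n → V) (k : Fin (2 * n)) :
    (∃ i, interleave u u' k = u i) ∨ (∃ i, interleave u u' k = u' i) := by
  unfold interleave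
  split_ifs
  · exact Or.inl ⟨_, rfl⟩
  · exact Or.inr ⟨_, rfl⟩

theorem prod_interleave {V A : Type*} [Monoid A] {n : ℕ} (u u' : Fin n → V) (g : V → A) :
    (List.ofFn fun k => g (interleave u u' k)).prod
      = (List.ofFn fun i : Fin n => g (u i) * g (u' i)).prod := by
  rw [List.ofFn_mul', List.prod_flatten, List.map_ofFn]
  congr 2
  funext i
  have h0 := interleave_even u u' i (by omega)
  have h1 := interleave_odd u u' i (by omega)
  simp only [Function.comp, List.ofFn_succ, List.ofFn_zero, List.prod_cons, List.prod_nil,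
    mul_one]
  exact congr_arg₂ (fun a b => g a * g b) h0 h1

variable {V A : Type*} [AddCommGroup V] [Module ℂ V] [Ring A] [Algebra ℂ A]

theorem hyp_expand {n : ℕ} {β : LinearMap.BilinForm ℂ V} (hβ : LinearMap.IsAlt β)
    {e e' : Fin n → V} (h : IsHyperbolicBasis β e e') (x : V) :
    x = ∑ j, (β x (e' j) • e j - β x (e j) • e' j) := by
  obtain ⟨-, hs, h1, h2, h3⟩ := h
  let F : V →ₗ[ℂ] V := ∑ j, ((β.flip (e' j)).smulRight (e j) - (β.flip (e j)).smulRight (e' j))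
  have hF : ∀ x, F x = ∑ j, (β x (e' j) • e j - β x (e j) • e' j) := by
    intro x; simp [F]
  have h4 : ∀ i j, β (e' i) (e j) = -(if j = i then 1 else 0) := by
    intro i j; rw [← h3, hβ.neg]
  have key : LinearMap.id = F := by
    apply LinearMap.ext_on_range hs
    intro k
    rw [hF]
    rcases interleave_cases e e' k with ⟨i, hi⟩ | ⟨i, hi⟩
    · rw [hi]; simp [h1, h3]
    · rw [hi]; simp [h2, h4]
  rw [← hF, ← key]; rfl

theorem omega_eq {ι κ : Type*} [Fintype ι] [Fintype κ] {β : LinearMap.BilinForm ℂ V}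
    (hβ : LinearMap.IsAlt β) (f : V →ₗ[ℂ] A) (hf : ∀ v, f v * f v = 0)
    (e e' : ι → V) (d d' : κ → V)
    (he : ∀ x, x = ∑ j, (β x (e' j) • e j - β x (e j) • e' j))
    (hd : ∀ x, x = ∑ j, (β x (d' j) • d j - β x (d j) • d' j)) :
    ∑ j, f (e j) * f (e' j) = ∑ i, f (d i) * f (d' i) := by
  have anti : ∀ v w, f v * f w = - (f w * f v) := by
    intro v w
    have := hf (v + w)
    simp only [map_add, mul_add, add_mul, hf] at this
    rw [eq_neg_iff_add_eq_zero, ← this]; abel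
  have E1 : ∀ x, f x = ∑ i, (β x (d' i) • f (d i) - β x (d i) • f (d' i)) := by
    intro x
    conv_lhs => rw [hd x]
    simp
  have E2 : ∀ x, f x = ∑ j, (β x (e' j) • f (e j) - β x (e j) • f (e' j)) := by
    intro x
    conv_lhs => rw [he x]
    simp
  have main : (2 : ℂ) • ∑ j, f (e j) * f (e' j) = (2 : ℂ) • ∑ i, f (d i) * f (d' i) := by
    rw [Finset.smul_sum]
    have : ∀ j, (2 : ℂ) • (f (e j) * f (e' j)) = f (e j) * f (e' j) - f (e' j) * f (e j) := by
      intro j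
      rw [anti (e' j), two_smul, sub_neg_eq_add]
    rw [Finset.sum_congr rfl fun j _ => this j, Finset.smul_sum]
    have this2 : ∀ i, (2 : ℂ) • (f (d i) * f (d' i)) = f (d i) * f (d' i) - f (d' i) * f (d i) := by
      intro j
      rw [anti (d' j), two_smul, sub_neg_eq_add]
    rw [Finset.sum_congr rfl fun i _ => this2 i]
    have L : ∀ j, f (e j) * f (e' j) - f (e' j) * f (e j) =
        ∑ i, ((β (d i) (e' j) • f (e j) - β (d i) (e j) • f (e' j)) * f (d' i)
          - (β (d' i) (e' j) • f (e j) - β (d' i) (e j) • f (e' j)) * f (d i)) := by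
      intro j
      have p1 : f (e j) * f (e' j) = f (e j) *
        ∑ i, (β (e' j) (d' i) • f (d i) - β (e' j) (d i) • f (d' i)) := by rw [← E1]
      have p2 : f (e' j) * f (e j) = f (e' j) *
        ∑ i, (β (e j) (d' i) • f (d i) - β (e j) (d i) • f (d' i)) := by rw [← E1]
      rw [p1, p2]
      rw [Finset.mul_sum, Finset.mul_sum, ← Finset.sum_sub_distrib]
      refine Finset.sum_congr rfl fun i _ => ?_
      rw [← hβ.neg (e' j) (d i), ← hβ.neg (e j) (d i), ← hβ.neg (e' j) (d' i),
        ← hβ.neg (e j) (d' i)]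
      simp only [mul_sub, sub_mul, mul_smul_comm, smul_mul_assoc, neg_smul, neg_mul]
      abel
    rw [Finset.sum_congr rfl fun j _ => L j, Finset.sum_comm]
    refine Finset.sum_congr rfl fun i _ => ?_
    rw [Finset.sum_sub_distrib, ← Finset.sum_mul, ← Finset.sum_mul, ← E2, ← E2]
  have h2 : (2 : ℂ) ≠ 0 := two_ne_zero
  exact smul_right_injective _ h2 main

theorem add_pow_sq_zero {a S : A} (h : Commute a S) (ha : a * a = 0) (m : ℕ) :
    (a + S) ^ (m + 1) = S ^ (m + 1) + ((m + 1 : ℕ) : A) * (a * S ^ m) := by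
  induction m with
  | zero => simp [add_comm]
  | succ m ih =>
    rw [pow_succ, ih, add_mul, mul_add, mul_add]
    have h1 : S ^ (m + 1) * a = a * S ^ (m + 1) := (h.pow_right _).symm.eq
    have h2 : a * S ^ m * a = 0 := by
      rw [mul_assoc, ← (h.pow_right m).eq, ← mul_assoc, ha, zero_mul]
    rw [mul_assoc _ _ a, h2, mul_assoc _ _ S, mul_assoc a, ← pow_succ, ← pow_succ, h1]
    push_cast
    noncomm_ring

theorem sum_pow_sq_zero (n : ℕ) : ∀ (a : Fin n → A), (∀ i j, Commute (a i) (a j)) →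
    (∀ i, a i * a i = 0) →
    (∑ i, a i) ^ n = (n.factorial : A) * (List.ofFn a).prod ∧ (∑ i, a i) ^ (n + 1) = 0 := by
  induction n with
  | zero => intro a _ _; simp
  | succ n ih =>
    intro a hc hs
    obtain ⟨h1, h2⟩ := ih (fun i => a i.succ) (fun i j => hc _ _) (fun i => hs _)
    have hcom : Commute (a 0) (∑ i : Fin n, a i.succ) := Commute.sum_right _ _ _ fun i _ => hc _ _
    rw [Fin.sum_univ_succ]
    constructor
    · rw [add_pow_sq_zero hcom (hs 0), h2, h1, List.ofFn_succ, List.prod_cons, zero_add,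
        Nat.factorial_succ, Nat.cast_mul, mul_assoc, ← mul_assoc (a 0),
        ← (Nat.cast_commute _ (a 0)).eq, mul_assoc]
    · rw [add_pow_sq_zero hcom (hs 0), pow_succ _ (n+1), h2]
      simp

theorem prod_eq_of_sum_eq {n : ℕ} (f : V →ₗ[ℂ] A) (hf : ∀ v, f v * f v = 0)
    (e e' d d' : Fin n → V)
    (h : ∑ j, f (e j) * f (e' j) = ∑ i, f (d i) * f (d' i)) :
    (List.ofFn fun i => f (e i) * f (e' i)).prod = (List.ofFn fun i => f (d i) * f (d' i)).prod := by
  have anti : ∀ v w, f v * f w = - (f w * f v) := by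
    intro v w
    have := hf (v + w)
    simp only [map_add, mul_add, add_mul, hf] at this
    rw [eq_neg_iff_add_eq_zero, ← this]; abel
  have com1 : ∀ x y z, Commute (f x * f y) (f z) := by
    intro x y z
    change f x * f y * f z = f z * (f x * f y)
    rw [mul_assoc, anti y z, mul_neg, ← mul_assoc, anti x z, neg_mul, neg_neg, mul_assoc]
  have com : ∀ x y z w, Commute (f x * f y) (f z * f w) := fun x y z w =>
    (com1 x y z).mul_right (com1 x y w)
  have sq : ∀ x y, (f x * f y) * (f x * f y) = 0 := by
    intro x y
    rw [← mul_assoc, (com1 x y x).eq, ← mul_assoc, hf]; simp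
  have h1 := (sum_pow_sq_zero n (fun i => f (e i) * f (e' i)) (fun i j => com _ _ _ _)
    (fun i => sq _ _)).1
  have h2 := (sum_pow_sq_zero n (fun i => f (d i) * f (d' i)) (fun i j => com _ _ _ _)
    (fun i => sq _ _)).1
  rw [h, h2] at h1
  have h3 : (n.factorial : ℂ) ≠ 0 := by exact_mod_cast n.factorial_ne_zero
  have h4 := smul_right_injective A h3
  apply h4
  simp only [Algebra.smul_def, map_natCast]
  exact h1.symm

theorem alternating_comp_det {ι M P : Type*} [Fintype ι] [DecidableEq ι]
    [AddCommGroup M] [Module ℂ M] [AddCommGroup P] [Module ℂ P]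
    (b : Module.Basis ι ℂ M) (f : M [⋀^ι]→ₗ[ℂ] P) (B : M →ₗ[ℂ] M) :
    f (fun i => B (b i)) = LinearMap.det B • f b := by
  have key : f = (LinearMap.toSpanSingleton ℂ P (f b)).compAlternatingMap b.det := by
    refine Module.Basis.ext_alternating b fun i h => ?_
    let s : Equiv.Perm ι := Equiv.ofBijective i (Finite.injective_iff_bijective.1 h)
    change f (b ∘ s) = ((LinearMap.toSpanSingleton ℂ P (f b)).compAlternatingMap b.det) (b ∘ s)
    simp [AlternatingMap.map_perm, Module.Basis.det_self]
  have h2 : b.det (fun i => B (b i)) = LinearMap.det B := by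
    have := b.det_comp B b
    rw [Module.Basis.det_self, mul_one] at this
    exact this
  conv_lhs => rw [key]
  simp [h2]

end Generic

section Special

variable {G W U : Type*} [Group G] [Fintype G]
    [AddCommGroup W] [Module ℂ W] [AddCommGroup U] [Module ℝ U]
    (ρW : Representation ℂ G W) (ρU : Representation ℝ G U)

theorem exists_phi {q : ℕ} (u : Fin q → U) :
    ∃ Φ : (Fin q → W) →ₗ[ℂ] diagInvariantsC ρW ρU, ∀ v,
      (Φ v : W ⊗[ℝ] U) = (Fintype.card G : ℂ)⁻¹ •
        ∑ i, ∑ g : G, (ρW g (v i)) ⊗ₜ[ℝ] (ρU g (u i)) := by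
  have hmem : ∀ v : Fin q → W, (Fintype.card G : ℂ)⁻¹ •
        ∑ i, ∑ g : G, (ρW g (v i)) ⊗ₜ[ℝ] (ρU g (u i)) ∈ diagInvariantsC ρW ρU := by
    intro v
    apply Submodule.smul_mem
    apply Submodule.sum_mem
    intro i _ h
    rw [map_sum]
    refine Fintype.sum_equiv (Equiv.mulLeft h) _ _ fun g => ?_
    simp [TensorProduct.map_tmul]
  refine ⟨{ toFun := fun v => ⟨_, hmem v⟩, map_add' := ?_, map_smul' := ?_ }, fun v => rfl⟩
  · intro v w
    ext
    simp [TensorProduct.add_tmul, Finset.sum_add_distrib]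
  · intro c v
    ext
    simp only [Pi.smul_apply, map_smul, RingHom.id_apply, Submodule.coe_smul]
    rw [smul_comm c]
    simp only [Finset.smul_sum, TensorProduct.smul_tmul']

theorem phi_surj {q : ℕ} (u : Fin q → U)
    (hspan : Submodule.span ℝ (Set.range fun p : Fin q × G => ρU p.2 (u p.1)) = ⊤)
    (Φ : (Fin q → W) →ₗ[ℂ] diagInvariantsC ρW ρU)
    (hΦ : ∀ v, (Φ v : W ⊗[ℝ] U) = (Fintype.card G : ℂ)⁻¹ •
        ∑ i, ∑ g : G, (ρW g (v i)) ⊗ₜ[ℝ] (ρU g (u i))) :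
    Function.Surjective Φ := by
  have hG : (Fintype.card G : ℂ) ≠ 0 := by exact_mod_cast Fintype.card_ne_zero
  have key : ∀ x : W ⊗[ℝ] U, ∃ v, (Φ v : W ⊗[ℝ] U) = (Fintype.card G : ℂ)⁻¹ •
      ∑ g : G, TensorProduct.map ((ρW g).restrictScalars ℝ) (ρU g) x := by
    intro x
    induction x using TensorProduct.induction_on with
    | zero => exact ⟨0, by simp⟩
    | add x y hx hy =>
      obtain ⟨v, hv⟩ := hx
      obtain ⟨w, hw⟩ := hy
      exact ⟨v + w, by simp [hv, hw, Finset.sum_add_distrib]⟩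
    | tmul w y =>
      have hy : y ∈ Submodule.span ℝ (Set.range fun p : Fin q × G => ρU p.2 (u p.1)) := by
        rw [hspan]; trivial
      induction hy using Submodule.span_induction generalizing w with
      | zero => exact ⟨0, by simp⟩
      | add x y _ _ hx hy =>
        obtain ⟨v, hv⟩ := hx w
        obtain ⟨v', hv'⟩ := hy w
        exact ⟨v + v', by simp [hv, hv', TensorProduct.tmul_add, Finset.sum_add_distrib]⟩
      | smul a x _ hx =>
        obtain ⟨v, hv⟩ := hx (a • w)
        refine ⟨v, ?_⟩
        rw [hv]
        simp only [TensorProduct.smul_tmul]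
      | mem x hx =>
        obtain ⟨⟨i, h⟩, rfl⟩ := hx
        refine ⟨Pi.single i (ρW h⁻¹ w), ?_⟩
        rw [hΦ]
        congr 1
        rw [Finset.sum_eq_single i]
        · refine Fintype.sum_equiv (Equiv.mulRight h⁻¹) _ _ fun g => ?_
          simp [TensorProduct.map_tmul]
        · intro j _ hj
          simp [Pi.single_eq_of_ne hj]
        · simp
  intro x
  obtain ⟨v, hv⟩ := key x
  refine ⟨v, Subtype.ext ?_⟩
  rw [hv, Finset.sum_congr rfl fun g _ => x.2 g, Finset.sum_const, Finset.card_univ,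
    ← Nat.cast_smul_eq_nsmul ℂ, smul_smul, inv_mul_cancel₀ hG, one_smul]

theorem phi_form {q : ℕ} (u : Fin q → U)
    (σ : LinearMap.BilinForm ℝ U)
    (hσsymm : ∀ x y, σ x y = σ y x)
    (hσinv : ∀ (g : G) (x y : U), σ (ρU g x) (ρU g y) = σ x y)
    (κ : LinearMap.BilinForm ℂ W)
    (hκinv : ∀ (g : G) (x y : W), κ (ρW g x) (ρW g y) = κ x y)
    (T : (Fin q → W) → (Fin q → W))
    (hT : ∀ (v : Fin q → W) (i : Fin q),
      T v i = ∑ j : Fin q, ∑ g : G, ((σ (ρU g (u i)) (u j) : ℝ) : ℂ) • ρW g⁻¹ (v j))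
    (Φ : (Fin q → W) →ₗ[ℂ] diagInvariantsC ρW ρU)
    (hΦ : ∀ v, (Φ v : W ⊗[ℝ] U) = (Fintype.card G : ℂ)⁻¹ •
        ∑ i, ∑ g : G, (ρW g (v i)) ⊗ₜ[ℝ] (ρU g (u i))) (x y : Fin q → W) :
    betaE ρW ρU κ σ (Φ x) (Φ y) =
      ∑ i : Fin q, κ ((Fintype.card G : ℂ)⁻¹ • T x i) (y i) := by
  have hG : (Fintype.card G : ℂ) ≠ 0 := by exact_mod_cast Fintype.card_ne_zero
  have h1 : ∀ (w w' : W) (a b : U) , ∑ g : G, ∑ h : G,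
      ((σ (ρU g a) (ρU h b) : ℝ) : ℂ) * κ (ρW g w) (ρW h w')
      = (Fintype.card G : ℂ) * ∑ g : G, ((σ (ρU g b) a : ℝ) : ℂ) * κ (ρW g⁻¹ w) w' := by
    intro w w' a b
    rw [Finset.sum_congr rfl (g := fun _ => ∑ g : G, ((σ (ρU g b) a : ℝ) : ℂ) * κ (ρW g⁻¹ w) w')]
    · simp [Finset.card_univ]
    · intro g _
      refine Fintype.sum_equiv (Equiv.mulLeft g⁻¹) _ _ fun h => ?_
      simp only [Equiv.coe_mulLeft]
      rw [← hσinv g⁻¹, ← hκinv h⁻¹, hσsymm]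
      simp
  have h2 : ∀ w w' a b, LinearMap.BilinForm.tmul κ σ (w ⊗ₜ[ℝ] a) (w' ⊗ₜ[ℝ] b)
      = ((σ a b : ℝ) : ℂ) * κ w w' := by
    intro w w' a b
    simp
  unfold betaE
  rw [LinearMap.compl₁₂_apply, Submodule.subtype_apply, Submodule.subtype_apply, hΦ, hΦ]
  simp only [map_smul, LinearMap.smul_apply, map_sum, LinearMap.sum_apply, h2, hT, smul_eq_mul]
  simp only [← Finset.mul_sum]
  congr 1
  have h3 : ∀ j i, ∑ g : G, ∑ h : G,
      ((σ (ρU g (u i)) (ρU h (u j)) : ℝ) : ℂ) * κ (ρW g (x i)) (ρW h (y j))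
      = (Fintype.card G : ℂ) * ∑ g : G, ((σ (ρU g (u j)) (u i) : ℝ) : ℂ) * κ (ρW g⁻¹ (x i)) (y j) :=
    fun j i => h1 _ _ _ _
  have h4 : ∀ j i, ∑ g : G, ((σ (ρU g (u j)) (u i) : ℝ) : ℂ) * κ (ρW g⁻¹ (x i)) (y j)
     = (Fintype.card G : ℂ)⁻¹ * ∑ g : G, ∑ h : G,
      ((σ (ρU g (u i)) (ρU h (u j)) : ℝ) : ℂ) * κ (ρW g (x i)) (ρW h (y j)) := by
    intro j i
    rw [h3, inv_mul_cancel_left₀ hG]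
  simp only [h4]
  simp only [← Finset.mul_sum]
  congr 1
  refine Finset.sum_congr rfl fun i _ => ?_
  rw [Finset.sum_comm]
  refine Finset.sum_congr rfl fun j _ => ?_
  rw [Finset.sum_comm]

end Special

/-- Frölich's Pfaffian evaluation (Proposition 23 of Chinburg–Pappas–Taylor):
the restriction `β` of `σ ⊗ κ` to `E = (U ⊗ W)^G` is a non-degenerate alternating form,
`dim_ℂ E = 2qN`, the endomorphism `T` of `W^q` given by the matrix `(σ̃(u i, u j))` is
self-adjoint for `κ^{(q)}`, and for any automorphism `B` of `W^q` expressing `|G|⁻¹ T`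
as `B̂ B` and any hyperbolic basis `{e, e'}` of `(E, β)`, the wedge (in lexicographic
order) of the vectors `|G|⁻¹ r_G (u i ⊗ w n)` equals `det B` times the wedge of the
hyperbolic basis: `Pf_{(σ⊗κ)^G}(∧ |G|⁻¹ r_G(u i ⊗ w n)) = pf_{κ^{(q)}}(|G|⁻¹ T)`. -/
theorem pfaffian_of_average_basis {G W U : Type*} [Group G] [Fintype G]
    [AddCommGroup W] [Module ℂ W] [FiniteDimensional ℂ W]
    [AddCommGroup U] [Module ℝ U]
    (ρW : Representation ℂ G W) (ρU : Representation ℝ G U)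
    {q : ℕ} (u : Fin q → U)
    (hfree : LinearIndependent ℝ (fun p : Fin q × G => ρU p.2 (u p.1)) ∧
      Submodule.span ℝ (Set.range fun p : Fin q × G => ρU p.2 (u p.1)) = ⊤)
    (σ : LinearMap.BilinForm ℝ U)
    (hσsymm : ∀ x y, σ x y = σ y x)
    (hσnd : LinearMap.BilinForm.Nondegenerate σ)
    (hσinv : ∀ (g : G) (x y : U), σ (ρU g x) (ρU g y) = σ x y)
    (κ : LinearMap.BilinForm ℂ W) (hκalt : LinearMap.IsAlt κ)
    (hκnd : LinearMap.BilinForm.Nondegenerate κ)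
    (hκinv : ∀ (g : G) (x y : W), κ (ρW g x) (ρW g y) = κ x y)
    {N : ℕ} (wb wb' : Fin N → W) (hw : IsHyperbolicBasis κ wb wb')
    (rGt : W ⊗[ℝ] U → W ⊗[ℝ] U)
    (hrG : ∀ x, rGt x = ∑ g : G,
      TensorProduct.map ((ρW g).restrictScalars ℝ) (ρU g) x)
    (T : (Fin q → W) → (Fin q → W))
    (hT : ∀ (v : Fin q → W) (i : Fin q),
      T v i = ∑ j : Fin q, ∑ g : G, ((σ (ρU g (u i)) (u j) : ℝ) : ℂ) • ρW g⁻¹ (v j))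
    (B : (Fin q → W) ≃ₗ[ℂ] (Fin q → W))
    (hB : ∀ x y : Fin q → W,
      (∑ i : Fin q, κ ((Fintype.card G : ℂ)⁻¹ • T x i) (y i))
        = ∑ i : Fin q, κ (B x i) (B y i)) :
    LinearMap.IsAlt (betaE ρW ρU κ σ) ∧
    LinearMap.BilinForm.Nondegenerate (betaE ρW ρU κ σ) ∧
    Module.finrank ℂ (diagInvariantsC ρW ρU) = 2 * (q * N) ∧
    (∀ v v' : Fin q → W,
      (∑ i : Fin q, κ (T v i) (v' i)) = ∑ i : Fin q, κ (v i) (T v' i)) ∧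
    (∀ e e' : Fin (q * N) → (diagInvariantsC ρW ρU),
      IsHyperbolicBasis (betaE ρW ρU κ σ) e e' →
      (List.ofFn (fun i : Fin q =>
          (List.ofFn (fun m : Fin (2 * N) =>
            ExteriorAlgebra.ι ℂ
              ((Fintype.card G : ℂ)⁻¹ • rGt ((interleave wb wb' m) ⊗ₜ[ℝ] u i)))).prod)).prod
        = LinearMap.det (B : (Fin q → W) →ₗ[ℂ] (Fin q → W)) •
          (List.ofFn (fun k : Fin (2 * (q * N)) =>
            ExteriorAlgebra.ι ℂ (↑(interleave e e' k) : W ⊗[ℝ] U))).prod) := by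
  have hcard : (Fintype.card G : ℂ) ≠ 0 := by exact_mod_cast Fintype.card_ne_zero
  obtain ⟨Φ, hΦ⟩ := exists_phi ρW ρU u
  have hsurj := phi_surj ρW ρU u hfree.2 Φ hΦ
  have hform : ∀ x y, betaE ρW ρU κ σ (Φ x) (Φ y) = ∑ i, κ (B x i) (B y i) := by
    intro x y
    rw [phi_form ρW ρU u σ hσsymm hσinv κ hκinv T hT Φ hΦ, hB]
  let Ψ : (Fin q → W) →ₗ[ℂ] diagInvariantsC ρW ρU := Φ ∘ₗ (B.symm : (Fin q → W) →ₗ[ℂ] _)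
  have hΨB : ∀ x, Ψ (B x) = Φ x := fun x => by simp [Ψ]
  have hΨsurj : Function.Surjective Ψ := hsurj.comp B.symm.surjective
  have hΨ : ∀ x y, betaE ρW ρU κ σ (Ψ x) (Ψ y) = ∑ i, κ (x i) (y i) := by
    intro x y
    simp [Ψ, hform]
  have hΨs : ∀ x i w, betaE ρW ρU κ σ (Ψ x) (Ψ (Pi.single i w)) = κ (x i) w := by
    intro x i w
    rw [hΨ, Finset.sum_eq_single i]
    · simp
    · intro j _ hj; simp [Pi.single_eq_of_ne hj]
    · simp
  have halt : LinearMap.IsAlt (betaE ρW ρU κ σ) := by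
    intro x
    obtain ⟨v, rfl⟩ := hΨsurj x
    rw [hΨ]
    exact Finset.sum_eq_zero fun i _ => hκalt _
  have hsep : LinearMap.SeparatingLeft (betaE ρW ρU κ σ) := by
    intro x hx
    obtain ⟨v, rfl⟩ := hΨsurj x
    have : v = 0 := by
      funext i
      apply hκnd.1
      intro w
      rw [← hΨs, hx]
    rw [this, map_zero]
  have hinj : Function.Injective Ψ := by
    rw [injective_iff_map_eq_zero]
    intro v hv
    funext i
    apply hκnd.1
    intro w
    rw [← hΨs, hv]
    simp
  have hWrank : Module.finrank ℂ W = 2 * N := by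
    have := Module.finrank_eq_card_basis (Module.Basis.mk hw.1 hw.2.1.ge)
    simpa using this
  refine ⟨halt, ⟨hsep, ?_⟩, ?_, ?_, ?_⟩
  · intro y hy
    apply hsep
    intro x
    rw [← halt.neg, hy, neg_zero]
  · rw [← (LinearEquiv.ofBijective Ψ ⟨hinj, hΨsurj⟩).finrank_eq, Module.finrank_pi_fintype]
    simp [hWrank]
    ring
  · intro v v'
    have h1 : ∀ x y, (∑ i : Fin q, κ (T x i) (y i))
        = (Fintype.card G : ℂ) * ∑ i : Fin q, κ (B x i) (B y i) := by
      intro x y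
      rw [← hB]
      simp only [map_smul, LinearMap.smul_apply, smul_eq_mul, ← Finset.mul_sum]
      rw [mul_inv_cancel_left₀ hcard]
    have h2 : ∑ i : Fin q, κ (v i) (T v' i) = - ∑ i : Fin q, κ (T v' i) (v i) := by
      rw [← Finset.sum_neg_distrib]
      exact Finset.sum_congr rfl fun i _ => (hκalt.neg _ _).symm
    rw [h2, h1, h1, ← mul_neg, ← Finset.sum_neg_distrib]
    congr 1
    exact Finset.sum_congr rfl fun i _ => (hκalt.neg _ _).symm
  · intro e e' he
    let f : diagInvariantsC ρW ρU →ₗ[ℂ] ExteriorAlgebra ℂ (W ⊗[ℝ] U) :=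
      ExteriorAlgebra.ι ℂ ∘ₗ (diagInvariantsC ρW ρU).subtype
    have hf : ∀ v, f v * f v = 0 := fun v => ExteriorAlgebra.ι_sq_zero _
    let wB : Module.Basis (Fin (2 * N)) ℂ W := Module.Basis.mk hw.1 hw.2.1.ge
    have hwB : ∀ m, wB m = interleave wb wb' m := fun m => by simp [wB]
    let b : Module.Basis (Fin (q * (2 * N))) ℂ (Fin q → W) :=
      (Pi.basis fun _ : Fin q => wB).reindex
        ((Equiv.sigmaEquivProd (Fin q) (Fin (2 * N))).trans finProdFinEquiv)
    have hb : ∀ k, b k = Pi.single (finProdFinEquiv.symm k).1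
        (interleave wb wb' (finProdFinEquiv.symm k).2) := by
      intro k
      simp only [b, Module.Basis.reindex_apply, Pi.basis_apply, hwB]
      rfl
    -- nested products
    have nest : ∀ (n : ℕ) (F : Fin q → Fin n → ExteriorAlgebra ℂ (W ⊗[ℝ] U)),
        (List.ofFn fun i => (List.ofFn fun m => F i m).prod).prod
          = (List.ofFn fun k : Fin (q * n) =>
            F (finProdFinEquiv.symm k).1 (finProdFinEquiv.symm k).2).prod := by
      intro n F
      rw [List.ofFn_mul, List.prod_flatten, List.map_ofFn]
      congr 2
      funext i
      simp only [Function.comp]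
      congr 2
      funext m
      have : (⟨i * n + m, by
          calc
            ↑i * n + m < (i + 1) * n :=
              (Nat.add_lt_add_left m.prop _).trans_eq (by rw [Nat.add_mul, Nat.one_mul])
            _ ≤ _ := Nat.mul_le_mul_right _ i.prop⟩ : Fin (q * n)) = finProdFinEquiv (i, m) := by
        ext
        simp [finProdFinEquiv]
        ring
      rw [this, Equiv.symm_apply_apply]
    let d : Fin (q * N) → diagInvariantsC ρW ρU := fun k =>
      Ψ (Pi.single (finProdFinEquiv.symm k).1 (wb (finProdFinEquiv.symm k).2))
    let d' : Fin (q * N) → diagInvariantsC ρW ρU := fun k =>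
      Ψ (Pi.single (finProdFinEquiv.symm k).1 (wb' (finProdFinEquiv.symm k).2))
    have hd : ∀ x, x = ∑ j, (betaE ρW ρU κ σ x (d' j) • d j - betaE ρW ρU κ σ x (d j) • d' j) := by
      intro x
      obtain ⟨v, rfl⟩ := hΨsurj x
      simp only [d, d', hΨs]
      rw [Equiv.sum_comp finProdFinEquiv.symm (fun p : Fin q × Fin N =>
        (κ (v p.1) (wb' p.2) • Ψ (Pi.single p.1 (wb p.2))
          - κ (v p.1) (wb p.2) • Ψ (Pi.single p.1 (wb' p.2)))), Fintype.sum_prod_type]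
      simp only [← map_smul, ← map_sub, ← map_sum]
      congr 1
      funext i
      rw [Finset.sum_apply, Finset.sum_eq_single i]
      · rw [Finset.sum_apply]
        simpa using hyp_expand hκalt hw (v i)
      · intro j _ hj
        simp [Finset.sum_apply, Pi.single_eq_of_ne hj.symm]
      · simp
    have homega := omega_eq halt f hf e e' d d' (hyp_expand halt he) hd
    have hprod := prod_eq_of_sum_eq f hf e e' d d' homega
    have hrhs : (List.ofFn (fun k : Fin (2 * (q * N)) =>
            ExteriorAlgebra.ι ℂ (↑(interleave e e' k) : W ⊗[ℝ] U))).prod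
          = (List.ofFn fun i => f (d i) * f (d' i)).prod := by
      rw [← hprod]
      exact prod_interleave e e' f
    rw [hrhs]
    have hr : ∀ i m, (Fintype.card G : ℂ)⁻¹ • rGt ((interleave wb wb' m) ⊗ₜ[ℝ] u i)
        = (Ψ (B (Pi.single i (interleave wb wb' m))) : W ⊗[ℝ] U) := by
      intro i m
      rw [hΨB, hΦ, hrG]
      congr 1
      rw [Finset.sum_eq_single i]
      · simp
      · intro j _ hj
        simp [Pi.single_eq_of_ne hj]
      · simp
    simp only [hr]
    rw [nest]
    have hdet := alternating_comp_det b
      ((ExteriorAlgebra.ιMulti ℂ (q * (2 * N))).compLinearMap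
        ((diagInvariantsC ρW ρU).subtype ∘ₗ Ψ)) (B : (Fin q → W) →ₗ[ℂ] (Fin q → W))
    simp only [AlternatingMap.compLinearMap_apply, ExteriorAlgebra.ιMulti_apply, hb] at hdet
    refine hdet.trans ?_
    congr 1
    have n1 := nest (2 * N) (fun i m => f (Ψ (Pi.single i (interleave wb wb' m))))
    have n2 := nest N (fun i m => f (Ψ (Pi.single i (wb m))) * f (Ψ (Pi.single i (wb' m))))
    refine n1.symm.trans (Eq.trans ?_ n2)
    congr 2
    funext i
    exact prod_interleave wb wb' (fun w => f (Ψ (Pi.single i w)))
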